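/- Let S ⊆ E and let R be a face of 𝒜_S. The cone σ_{S,R} has maximal dimension in Ñ, i.e. finrank of the linear span of σ_{S,R} equals |E| + d = dim Ñ, if and only if S = E and R is a vertex of 𝒜, i.e. R is a singleton. (Characterization of maximal cones of the Lawrence fan, from the proof of Proposition 4.1.) -/

import Mathlib

open Set Submodule

noncomputable section

variable {E : Type*} [Fintype E] [DecidableEq E]
variable {M : Type*} [NormedAddCommGroup M] [NormedSpace ℝ M] [FiniteDimensional ℝ M]

/-- The positive closed halfspace `H_e^+` of the hyperplane `H_e`. -/
def Hplus (a : E → (M →ₗ[ℝ] ℝ)) (r : E → ℝ) (e : E) : Set M := {m | a e m + r e ≤ 0}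

/-- The negative closed halfspace `H_e^-` of the hyperplane `H_e`. -/
def Hminus (a : E → (M →ₗ[ℝ] ℝ)) (r : E → ℝ) (e : E) : Set M := {m | 0 ≤ a e m + r e}

/-- `R` is a face of the localization `𝒜_S`: a nonempty fiber of the sign map
`M → SignType^S`, `m ↦ (sign (a e m + r e))_{e ∈ S}`. -/
def IsFace (a : E → (M →ₗ[ℝ] ℝ)) (r : E → ℝ) (S : Set E) (R : Set M) : Prop :=
  ∃ m₀ : M, R = {m : M | ∀ e ∈ S, SignType.sign (a e m + r e) = SignType.sign (a e m₀ + r e)}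

/-- `S^+(R)`: the elements `e ∈ S` with `R ⊆ H_e^+`. -/
def posSet (a : E → (M →ₗ[ℝ] ℝ)) (r : E → ℝ) (S : Set E) (R : Set M) : Set E :=
  {e ∈ S | R ⊆ Hplus a r e}

/-- `S^-(R)`: the elements `e ∈ S` with `R ⊆ H_e^-`. -/
def negSet (a : E → (M →ₗ[ℝ] ℝ)) (r : E → ℝ) (S : Set E) (R : Set M) : Set E :=
  {e ∈ S | R ⊆ Hminus a r e}

/-- `S^0(R) = S^+(R) ∩ S^-(R)`. -/
def zeroSet (a : E → (M →ₗ[ℝ] ℝ)) (r : E → ℝ) (S : Set E) (R : Set M) : Set E :=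
  posSet a r S R ∩ negSet a r S R

/-- The linear map `(E → ℝ) → N` sending the basis vector `δ_e` to `a_e`. -/
def toN (a : E → (M →ₗ[ℝ] ℝ)) : (E → ℝ) →ₗ[ℝ] (M →ₗ[ℝ] ℝ) :=
  Fintype.linearCombination ℝ a

/-- `Λ`, the kernel of `(E → ℝ) → N`. -/
def Lam (a : E → (M →ₗ[ℝ] ℝ)) : Submodule ℝ (E → ℝ) := LinearMap.ker (toN a)

/-- The antidiagonal embedding `∇ : x ↦ (x, -x)`. -/
def nabla : (E → ℝ) →ₗ[ℝ] (E → ℝ) × (E → ℝ) :=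
  LinearMap.prod LinearMap.id (-LinearMap.id)

/-- `∇(Λ)`. -/
def nabLam (a : E → (M →ₗ[ℝ] ℝ)) : Submodule ℝ ((E → ℝ) × (E → ℝ)) :=
  (Lam a).map nabla

/-- The Lawrence cocharacter space `Ñ = ((E → ℝ) × (E → ℝ))/∇(Λ)`. -/
abbrev tildeN (a : E → (M →ₗ[ℝ] ℝ)) : Type _ := ((E → ℝ) × (E → ℝ)) ⧸ nabLam a

/-- `ρ_e^+`, the image of `(δ_e, 0)` in `Ñ`. -/
def rhoP (a : E → (M →ₗ[ℝ] ℝ)) (e : E) : tildeN a :=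
  Submodule.Quotient.mk (Pi.single e 1, 0)

/-- `ρ_e^-`, the image of `(0, δ_e)` in `Ñ`. -/
def rhoM (a : E → (M →ₗ[ℝ] ℝ)) (e : E) : tildeN a :=
  Submodule.Quotient.mk (0, Pi.single e 1)

/-- The cone `σ_{S,R} ⊆ Ñ` generated by `{ρ_e^+ : e ∈ S^+(R)} ∪ {ρ_f^- : f ∈ S^-(R)}`
together with `0`: the set of all nonnegative linear combinations of these generators. -/
def sigmaCone (a : E → (M →ₗ[ℝ] ℝ)) (r : E → ℝ) (S : Set E) (R : Set M) : Set (tildeN a) :=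
  {v | ∃ c d : E → ℝ, (∀ e, 0 ≤ c e) ∧ (∀ e, 0 ≤ d e) ∧
    v = ∑ e, (posSet a r S R).indicator c e • rhoP a e
      + ∑ e, (negSet a r S R).indicator d e • rhoM a e}

/-- The linear map whose kernel is `∇(Λ)`. -/
def bigPhi (a : E → (M →ₗ[ℝ] ℝ)) :
    ((E → ℝ) × (E → ℝ)) →ₗ[ℝ] (E → ℝ) × (M →ₗ[ℝ] ℝ) :=
  LinearMap.prod (LinearMap.fst ℝ _ _ + LinearMap.snd ℝ _ _) (toN a ∘ₗ LinearMap.fst ℝ _ _)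

theorem toN_surj (a : E → (M →ₗ[ℝ] ℝ)) (hspan : Submodule.span ℝ (Set.range a) = ⊤) :
    Function.Surjective (toN a) := by
  rw [← LinearMap.range_eq_top, ← hspan]
  exact Fintype.range_linearCombination ℝ a

theorem toN_single (a : E → (M →ₗ[ℝ] ℝ)) (e : E) : toN a (Pi.single e 1) = a e := by
  simp [toN, Fintype.linearCombination_apply_single]

theorem ker_bigPhi (a : E → (M →ₗ[ℝ] ℝ)) : LinearMap.ker (bigPhi a) = nabLam a := by
  ext ⟨x, y⟩
  constructor
  · intro h
    have h1 : x + y = 0 := congrArg Prod.fst h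
    have h2 : toN a x = 0 := congrArg Prod.snd h
    exact ⟨x, h2, Prod.ext rfl (eq_neg_of_add_eq_zero_right h1).symm⟩
  · rintro ⟨z, hz, h⟩
    obtain rfl : z = x := congrArg Prod.fst h
    obtain rfl : -z = y := congrArg Prod.snd h
    exact Prod.ext (add_neg_cancel z) hz

theorem bigPhi_surj (a : E → (M →ₗ[ℝ] ℝ)) (hspan : Submodule.span ℝ (Set.range a) = ⊤) :
    Function.Surjective (bigPhi a) := by
  rintro ⟨u, n⟩
  obtain ⟨x, rfl⟩ := toN_surj a hspan n
  exact ⟨(x, u - x), by simp [bigPhi]⟩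

theorem finrank_tildeN (a : E → (M →ₗ[ℝ] ℝ)) (hspan : Submodule.span ℝ (Set.range a) = ⊤) :
    Module.finrank ℝ (tildeN a) = Fintype.card E + Module.finrank ℝ M := by
  have e1 := (bigPhi a).quotKerEquivOfSurjective (bigPhi_surj a hspan)
  have e2 := Submodule.quotEquivOfEq _ _ (ker_bigPhi a)
  rw [(e2.symm.trans e1).finrank_eq, Module.finrank_prod, Module.finrank_fintype_fun_eq_card]
  congr 1
  exact Subspace.dual_finrank_eq

/-- The functional on `Ñ` attached to `(u, m)`. -/
def bigFun (a : E → (M →ₗ[ℝ] ℝ)) (u : E → ℝ) (m : M) : tildeN a →ₗ[ℝ] ℝ :=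
  (nabLam a).liftQ
    ((LinearMap.coprod (Fintype.linearCombination ℝ u) (LinearMap.applyₗ m)) ∘ₗ bigPhi a)
    (by rw [← ker_bigPhi]; exact LinearMap.ker_le_ker_comp _ _)

theorem bigFun_rhoP (a : E → (M →ₗ[ℝ] ℝ)) (u : E → ℝ) (m : M) (e : E) :
    bigFun a u m (rhoP a e) = u e + a e m := by
  unfold bigFun rhoP
  erw [Submodule.liftQ_apply]
  simp [bigPhi, toN_single, Fintype.linearCombination_apply_single]

theorem bigFun_rhoM (a : E → (M →ₗ[ℝ] ℝ)) (u : E → ℝ) (m : M) (e : E) :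
    bigFun a u m (rhoM a e) = u e := by
  unfold bigFun rhoM
  erw [Submodule.liftQ_apply]
  simp [bigPhi, Fintype.linearCombination_apply_single]

theorem exists_bigFun (a : E → (M →ₗ[ℝ] ℝ)) (hspan : Submodule.span ℝ (Set.range a) = ⊤)
    (f : tildeN a →ₗ[ℝ] ℝ) : ∃ m : M, ∀ e, f (rhoP a e) = f (rhoM a e) + a e m := by
  let G : (E → ℝ) →ₗ[ℝ] ℝ := f ∘ₗ (nabLam a).mkQ ∘ₗ nabla
  have hG : LinearMap.ker (toN a) ≤ LinearMap.ker G := by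
    intro x hx
    have : (nabLam a).mkQ (nabla x) = 0 := by
      rw [Submodule.mkQ_apply, Submodule.Quotient.mk_eq_zero]
      exact Submodule.mem_map_of_mem hx
    simp [G, this]
  let h : (M →ₗ[ℝ] ℝ) →ₗ[ℝ] ℝ := (LinearMap.ker (toN a)).liftQ G hG ∘ₗ
    ((toN a).quotKerEquivOfSurjective (toN_surj a hspan)).symm.toLinearMap
  have hh : ∀ x, h (toN a x) = G x := by
    intro x
    have : ((toN a).quotKerEquivOfSurjective (toN_surj a hspan)).symm (toN a x)
        = Submodule.Quotient.mk x := by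
      rw [LinearEquiv.symm_apply_eq]
      rfl
    simp only [h, LinearMap.comp_apply, LinearEquiv.coe_coe, this]
    exact Submodule.liftQ_apply _ _ _
  obtain ⟨m, hm⟩ := (Module.evalEquiv ℝ M).surjective h
  refine ⟨m, fun e => ?_⟩
  have h1 := hh (Pi.single e 1)
  rw [toN_single, ← hm] at h1
  have h2 : (Module.evalEquiv ℝ M) m (a e) = a e m := by simp
  have h3 : (nabLam a).mkQ (nabla (Pi.single e 1)) = rhoP a e - rhoM a e := by
    unfold rhoP rhoM
    rw [← Submodule.Quotient.mk_sub, Submodule.mkQ_apply]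
    congr 1
    simp [nabla]
  rw [h2] at h1
  simp only [G, LinearMap.comp_apply, h3, map_sub] at h1
  linarith

theorem fun_ext (a : E → (M →ₗ[ℝ] ℝ)) (f : tildeN a →ₗ[ℝ] ℝ)
    (hP : ∀ e, f (rhoP a e) = 0) (hM : ∀ e, f (rhoM a e) = 0) : f = 0 := by
  apply Submodule.linearMap_qext
  apply LinearMap.prod_ext
  · apply LinearMap.pi_ext'
    intro e
    ext
    exact hP e
  · apply LinearMap.pi_ext'
    intro e
    ext
    exact hM e

theorem span_le_ker_iff (a : E → (M →ₗ[ℝ] ℝ)) (r : E → ℝ) (S : Set E) (R : Set M)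
    (f : tildeN a →ₗ[ℝ] ℝ) :
    Submodule.span ℝ (sigmaCone a r S R) ≤ LinearMap.ker f ↔
      (∀ e ∈ posSet a r S R, f (rhoP a e) = 0) ∧ (∀ e ∈ negSet a r S R, f (rhoM a e) = 0) := by
  rw [Submodule.span_le]
  constructor
  · intro h
    constructor
    · intro e he
      apply h
      refine ⟨Pi.single e 1, 0, fun e' => ?_, fun _ => le_rfl, ?_⟩
      · by_cases h : e' = e
        · subst h; simp
        · simp [h]
      · rw [Finset.sum_eq_single e]
        · simp [he]
        · intro b _ hb
          by_cases hb' : b ∈ posSet a r S R <;> simp [hb, hb']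
        · simp
    · intro e he
      apply h
      refine ⟨0, Pi.single e 1, fun _ => le_rfl, fun e' => ?_, ?_⟩
      · by_cases h : e' = e
        · subst h; simp
        · simp [h]
      · rw [Finset.sum_eq_single (s := Finset.univ)
          (f := fun e' => (negSet a r S R).indicator (Pi.single e 1) e' • rhoM a e') e]
        · simp [he]
        · intro b _ hb
          by_cases hb' : b ∈ negSet a r S R <;> simp [hb, hb']
        · simp
  · rintro ⟨h1, h2⟩ v ⟨c, d, -, -, rfl⟩
    simp only [SetLike.mem_coe, LinearMap.mem_ker, map_add, map_sum, map_smul]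
    rw [Finset.sum_eq_zero, Finset.sum_eq_zero, add_zero]
    · intro e _
      by_cases he : e ∈ negSet a r S R
      · rw [h2 e he, smul_zero]
      · simp [he]
    · intro e _
      by_cases he : e ∈ posSet a r S R
      · rw [h1 e he, smul_zero]
      · simp [he]

theorem eq_zero_of_forall (a : E → (M →ₗ[ℝ] ℝ)) (hspan : Submodule.span ℝ (Set.range a) = ⊤)
    (m : M) (h : ∀ e, a e m = 0) : m = 0 := by
  rw [← Module.forall_dual_apply_eq_zero_iff ℝ m]
  intro φ
  obtain ⟨x, rfl⟩ := toN_surj a hspan φ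
  simp [toN, Fintype.linearCombination_apply, h]

theorem sign_perturb (b c : ℝ) (h : b = 0 → c = 0) :
    ∀ᶠ t in nhdsWithin (0 : ℝ) (Set.Ioi 0), SignType.sign (b + t * c) = SignType.sign b := by
  apply Filter.Eventually.filter_mono nhdsWithin_le_nhds
  have hc : Filter.Tendsto (fun t : ℝ => b + t * c) (nhds 0) (nhds b) := by
    have : Continuous (fun t : ℝ => b + t * c) := by fun_prop
    simpa using this.tendsto 0
  rcases lt_trichotomy b 0 with hb | hb | hb
  · filter_upwards [hc.eventually (gt_mem_nhds hb)] with t ht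
    rw [sign_neg ht, sign_neg hb]
  · simp [hb, h hb]
  · filter_upwards [hc.eventually (lt_mem_nhds hb)] with t ht
    rw [sign_pos ht, sign_pos hb]

theorem span_top_iff (a : E → (M →ₗ[ℝ] ℝ)) (r : E → ℝ)
    (hspan : Submodule.span ℝ (Set.range a) = ⊤)
    (S : Set E) (R : Set M) (hR : IsFace a r S R) :
    Submodule.span ℝ (sigmaCone a r S R) = ⊤ ↔ S = Set.univ ∧ ∃ x : M, R = {x} := by
  obtain ⟨m₀, hR⟩ := hR
  have hm₀ : m₀ ∈ R := by rw [hR]; intro e _; rfl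
  constructor
  · intro htop
    have key : ∀ (u : E → ℝ) (m : M), (∀ e ∈ posSet a r S R, u e + a e m = 0) →
        (∀ e ∈ negSet a r S R, u e = 0) → ∀ e, u e = 0 ∧ a e m = 0 := by
      intro u m h1 h2 e
      have h := (span_le_ker_iff a r S R (bigFun a u m)).2
        ⟨fun e he => by rw [bigFun_rhoP]; exact h1 e he,
          fun e he => by rw [bigFun_rhoM]; exact h2 e he⟩
      rw [htop] at h
      have hp : bigFun a u m (rhoP a e) = 0 := h Submodule.mem_top
      have hm : bigFun a u m (rhoM a e) = 0 := h Submodule.mem_top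
      rw [bigFun_rhoP] at hp
      rw [bigFun_rhoM] at hm
      exact ⟨hm, by linarith⟩
    constructor
    · by_contra hS
      obtain ⟨e, he⟩ := (Set.ne_univ_iff_exists_notMem S).1 hS
      have hne : ∀ e' ∈ S, e' ≠ e := fun e' h h' => he (h' ▸ h)
      have := (key (Pi.single e 1) 0 (fun e' h => by simp [hne e' h.1])
        (fun e' h => by simp [hne e' h.1]) e).1
      simp at this
    · refine ⟨m₀, Set.eq_singleton_iff_unique_mem.2 ⟨hm₀, fun x hx => ?_⟩⟩
      classical
      have := key (fun e => if e ∈ negSet a r S R then 0 else - a e (x - m₀)) (x - m₀)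
        (fun e he => by
          by_cases h : e ∈ negSet a r S R
          · have p1 : a e x + r e ≤ 0 := he.2 hx
            have p2 : 0 ≤ a e x + r e := h.2 hx
            have p3 : a e m₀ + r e ≤ 0 := he.2 hm₀
            have p4 : 0 ≤ a e m₀ + r e := h.2 hm₀
            simp only [h, if_true, map_sub]
            linarith
          · simp [h])
        (fun e he => by simp [he])
      exact sub_eq_zero.1 (eq_zero_of_forall a hspan _ fun e => (this e).2)
  · rintro ⟨rfl, x, hx⟩
    rw [hx] at hm₀
    obtain rfl : m₀ = x := hm₀
    by_contra hlt
    obtain ⟨f, hf, hle⟩ := Submodule.exists_le_ker_of_lt_top _ (lt_top_iff_ne_top.2 hlt)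
    rw [span_le_ker_iff] at hle
    obtain ⟨h1, h2⟩ := hle
    obtain ⟨m, hm⟩ := exists_bigFun a hspan f
    have hpos : ∀ e, a e m₀ + r e ≤ 0 → f (rhoP a e) = 0 := fun e he =>
      h1 e ⟨Set.mem_univ e, by rw [hx]; rintro _ rfl; exact he⟩
    have hneg : ∀ e, 0 ≤ a e m₀ + r e → f (rhoM a e) = 0 := fun e he =>
      h2 e ⟨Set.mem_univ e, by rw [hx]; rintro _ rfl; exact he⟩
    have hm0 : m = 0 := by
      have hev : ∀ᶠ t in nhdsWithin (0 : ℝ) (Set.Ioi 0), ∀ e : E,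
          SignType.sign ((a e m₀ + r e) + t * a e m) = SignType.sign (a e m₀ + r e) := by
        rw [Filter.eventually_all]
        intro e
        apply sign_perturb
        intro h
        have := hm e
        rw [hpos e h.le, hneg e h.ge] at this
        linarith
      obtain ⟨t, ht, ht0⟩ := (hev.and self_mem_nhdsWithin).exists
      have hmem : m₀ + t • m ∈ R := by
        rw [hR]
        intro e _
        rw [← ht e]
        congr 1
        simp only [map_add, map_smul, smul_eq_mul]
        ring
      rw [hx, Set.mem_singleton_iff, add_eq_left, smul_eq_zero] at hmem
      exact hmem.resolve_left (ne_of_gt ht0)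
    subst hm0
    apply hf
    have heq : ∀ e, f (rhoP a e) = f (rhoM a e) := fun e => by simpa using hm e
    have hz : ∀ e, f (rhoP a e) = 0 := fun e => by
      rcases le_total (a e m₀ + r e) 0 with h | h
      · exact hpos e h
      · rw [heq]; exact hneg e h
    exact fun_ext a f hz fun e => by rw [← heq, hz]

/-- Characterization of maximal cones of the Lawrence fan (from the proof of Proposition 4.1):
`σ_{S,R}` has maximal dimension `|E| + d` iff `S = E` and `R` is a vertex of `𝒜`. -/
theorem sigmaCone_maximal_iff
    (a : E → (M →ₗ[ℝ] ℝ)) (r : E → ℝ)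
    (ha : ∀ e, a e ≠ 0) (hspan : Submodule.span ℝ (Set.range a) = ⊤)
    (S : Set E) (R : Set M) (hR : IsFace a r S R) :
    Module.finrank ℝ (Submodule.span ℝ (sigmaCone a r S R)) =
        Fintype.card E + Module.finrank ℝ M ↔
      S = Set.univ ∧ ∃ x : M, R = {x} := by
  rw [← finrank_tildeN a hspan, ← span_top_iff a r hspan S R hR]
  constructor
  · exact Submodule.eq_top_of_finrank_eq
  · intro h
    rw [h, finrank_top]

end
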